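/- Over a field of characteristic not 2, a square matrix M is the sum of two square-zero matrices if and only if M is similar to −M. -/

import Mathlib

namespace Polynomial

variable {F : Type*} [Field F]

theorem isCoprime_comp_neg_X {p q : F[X]} (h : IsCoprime p q) :
    IsCoprime (p.comp (-X)) (q.comp (-X)) :=
  h.map (compRingHom (-X))

theorem comp_neg_X_dvd_comp_neg_X {p q : F[X]} (h : p ∣ q) : p.comp (-X) ∣ q.comp (-X) :=
  _root_.map_dvd (compRingHom (-X)) h

theorem irreducible_comp_neg_X {p : F[X]} (h : Irreducible p) : Irreducible (p.comp (-X)) :=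
  (MulEquiv.irreducible_iff (algEquivAevalNegX (R := F))).2 h

/-- A polynomial `b` coprime to `b(-X)` is coprime to every polynomial whose irreducible
factors `p` all divide their reflection `p(-X)`. -/
theorem isCoprime_of_forall_irreducible_dvd_comp_neg_X {a b : F[X]} (hb : IsCoprime b (b.comp (-X)))
    (ha : ∀ p, Irreducible p → p ∣ a → p ∣ p.comp (-X)) : IsCoprime a b := by
  refine isCoprime_of_irreducible_dvd ?_ fun p hp hpa hpb ↦ ?_
  · rintro ⟨-, rfl⟩
    exact not_isCoprime_zero_zero (by simpa using hb)
  · exact hp.not_isUnit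
      (hb.isUnit_of_dvd' hpb ((ha p hp hpa).trans (comp_neg_X_dvd_comp_neg_X hpb)))

/-- Every nonzero polynomial divides `a * (b * b(-X))` with the irreducible factors of `a`
invariant under reflection up to units, and `b` coprime to its reflection. -/
theorem exists_dvd_mul_mul_comp_neg_X (m : F[X]) (hm : m ≠ 0) :
    ∃ a b : F[X], a ≠ 0 ∧ m ∣ a * (b * b.comp (-X)) ∧ IsCoprime b (b.comp (-X)) ∧
      ∀ p, Irreducible p → p ∣ a → p ∣ p.comp (-X) := by
  induction m using UniqueFactorizationMonoid.induction_on_prime with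
  | h₁ => exact absurd rfl hm
  | h₂ m hu =>
    exact ⟨1, 1, one_ne_zero, hu.dvd, by simpa using isCoprime_one_left, fun p hp h ↦
      absurd (isUnit_of_dvd_one h) hp.not_isUnit⟩
  | h₃ m p hm0 hp ih =>
    obtain ⟨a, b, ha0, hdvd, hb, ha⟩ := ih hm0
    have hpi := hp.irreducible
    have hpi' := irreducible_comp_neg_X hpi
    by_cases hsym : p ∣ p.comp (-X)
    · refine ⟨p * a, b, mul_ne_zero hp.ne_zero ha0, ?_, hb, fun q hq hqa ↦ ?_⟩
      · rw [mul_assoc]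
        exact mul_dvd_mul_left p hdvd
      · rcases hq.prime.dvd_or_dvd hqa with h | h
        · have := (hq.associated_of_dvd hpi h).symm.dvd
          exact h.trans (hsym.trans (comp_neg_X_dvd_comp_neg_X this))
        · exact ha q hq h
    · have hpp : IsCoprime p (p.comp (-X)) := (hpi.coprime_iff_not_dvd).2 hsym
      by_cases hpb : p ∣ b.comp (-X)
      · have h1 : IsCoprime b p := hb.of_isCoprime_of_dvd_right hpb
        refine ⟨a, b * p.comp (-X), ha0, ?_, ?_, ha⟩
        · rw [mul_comp, comp_neg_X_comp_neg_X]
          obtain ⟨c, hc⟩ := hdvd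
          exact ⟨c * p.comp (-X), by linear_combination (p * p.comp (-X)) * hc⟩
        · rw [mul_comp, comp_neg_X_comp_neg_X]
          exact IsCoprime.mul_left (hb.mul_right h1)
            ((isCoprime_comp_neg_X h1).symm.mul_right hpp.symm)
      · have h1 : IsCoprime p (b.comp (-X)) := (hpi.coprime_iff_not_dvd).2 hpb
        have h2 := isCoprime_comp_neg_X h1
        rw [comp_neg_X_comp_neg_X] at h2
        refine ⟨a, b * p, ha0, ?_, ?_, ha⟩
        · rw [mul_comp]
          obtain ⟨c, hc⟩ := hdvd
          exact ⟨c * p.comp (-X), by linear_combination (p * p.comp (-X)) * hc⟩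
        · rw [mul_comp]
          exact IsCoprime.mul_left (hb.mul_right h2.symm) (h1.mul_right hpp)

/-- The reflection `p ↦ p(-X)` descends to the quotient by a reflection-invariant ideal. -/
theorem exists_involutive_quotient {I : Ideal F[X]} (hI : ∀ p ∈ I, p.comp (-X) ∈ I) :
    ∃ s : F[X] ⧸ I →+ F[X] ⧸ I, (∀ x, s (s x) = x) ∧
      ∀ (r : F[X]) x, s (r • x) = r.comp (-X) • s x := by
  have hI' : I ≤ I.comap (compRingHom (-X)) := fun p hp ↦ hI p hp
  refine ⟨(Ideal.quotientMap I (compRingHom (-X)) hI').toAddMonoidHom, fun x ↦ ?_, fun r x ↦ ?_⟩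
  · obtain ⟨x, rfl⟩ := Ideal.Quotient.mk_surjective x
    simp [comp_neg_X_comp_neg_X]
  · obtain ⟨x, rfl⟩ := Ideal.Quotient.mk_surjective x
    have h : ∀ p q : F[X], p • Ideal.Quotient.mk I q = Ideal.Quotient.mk I (p * q) :=
      fun _ _ ↦ rfl
    simp [h]

end Polynomial

namespace Module.End

open Polynomial

variable {F V : Type*} [Field F] [AddCommGroup V] [Module F V] {φ : Module.End F V}

theorem aeval_restrict_apply {W : Submodule F V} (hW : ∀ v ∈ W, φ v ∈ W) (p : F[X]) (w : W) :
    (aeval (φ.restrict hW) p w : V) = aeval φ p w := by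
  induction p using Polynomial.induction_on' with
  | add p q hp hq => simp [hp, hq]
  | monomial n c =>
    have key : ∀ k : ℕ, (((φ.restrict hW) ^ k) w : V) = (φ ^ k) w := by
      intro k
      induction k with
      | zero => simp
      | succ k ih => simp [pow_succ', ih]
    simp [aeval_monomial, key]

theorem aeval_restrict_ker_aeval (p : F[X])
    (hW : ∀ v ∈ LinearMap.ker (aeval φ p), φ v ∈ LinearMap.ker (aeval φ p)) :
    aeval (φ.restrict hW) p = 0 := by
  ext w
  simp [aeval_restrict_apply]

theorem apply_mem_ker_aeval (φ : Module.End F V) (p : F[X]) :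
    ∀ v ∈ LinearMap.ker (aeval φ p), φ v ∈ LinearMap.ker (aeval φ p) := by
  intro v hv
  have h : aeval φ p (φ v) = φ (aeval φ p v) := by
    have hc : Commute (aeval φ p) (aeval φ X) := (Commute.all p X).map (aeval φ)
    rw [aeval_X] at hc
    exact LinearMap.congr_fun hc.eq v
  rw [LinearMap.mem_ker] at hv ⊢
  rw [h, hv, map_zero]

theorem isCompl_ker_aeval {p q : F[X]} (hpq : IsCoprime p q) (h : aeval φ (p * q) = 0) :
    IsCompl (LinearMap.ker (aeval φ p)) (LinearMap.ker (aeval φ q)) :=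
  ⟨disjoint_ker_aeval_of_isCoprime φ hpq, by
    rw [codisjoint_iff, sup_ker_aeval_eq_ker_aeval_mul_of_coprime φ hpq, h, LinearMap.ker_zero]⟩

theorem apply_aeval_of_anticommute {T : V →ₗ[F] V} (hT : ∀ v, T (φ v) = -φ (T v)) (p : F[X])
    (v : V) : T (aeval φ p v) = aeval φ (p.comp (-X)) (T v) := by
  induction p using Polynomial.induction_on generalizing v with
  | C a => simp
  | add p q hp hq => simp [hp, hq]
  | monomial n a ih =>
    rw [pow_succ, ← mul_assoc, map_mul, mul_apply, ih, mul_comp, map_mul, mul_apply]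
    simp [hT]

/-- Automorphisms anticommuting with `φ` on complementary invariant subspaces glue. -/
theorem exists_anticommute_of_isCompl {W W' : Submodule F V} (h : IsCompl W W')
    (hW : ∀ v ∈ W, φ v ∈ W) (hW' : ∀ v ∈ W', φ v ∈ W') {T : W ≃ₗ[F] W} {T' : W' ≃ₗ[F] W'}
    (hT : ∀ v, T (φ.restrict hW v) = -φ.restrict hW (T v))
    (hT' : ∀ v, T' (φ.restrict hW' v) = -φ.restrict hW' (T' v)) :
    ∃ S : V ≃ₗ[F] V, (∀ v, S (φ v) = -φ (S v)) ∧
      ((∀ v, T (T v) = v) → (∀ v, T' (T' v) = v) → ∀ v, S (S v) = v) := by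
  set e := Submodule.prodEquivOfIsCompl W W' h with he
  have hφ : ∀ x : W × W', φ (e x) = e (φ.restrict hW x.1, φ.restrict hW' x.2) := by
    intro x
    simp [he]
  refine ⟨e.symm ≪≫ₗ (T.prodCongr T') ≪≫ₗ e, fun v ↦ ?_, fun h1 h2 v ↦ ?_⟩
  · obtain ⟨x, rfl⟩ := e.surjective v
    rw [hφ]
    simp only [LinearEquiv.trans_apply, LinearEquiv.symm_apply_apply]
    rw [hφ, ← map_neg]
    congr 1
    ext1
    · exact hT _
    · exact hT' _
  · obtain ⟨x, rfl⟩ := e.surjective v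
    simp [h1, h2]

/-- If the irreducible factors of an annihilating polynomial are reflection-invariant up to units,
then `φ` anticommutes with an involution. -/
theorem exists_involutive_anticommute_of_aeval_eq_zero [FiniteDimensional F V] {a : F[X]}
    (ha0 : a ≠ 0) (haφ : aeval φ a = 0) (ha : ∀ p, Irreducible p → p ∣ a → p ∣ p.comp (-X)) :
    ∃ S : V ≃ₗ[F] V, (∀ v, S (φ v) = -φ (S v)) ∧ ∀ v, S (S v) = v := by
  classical
  obtain ⟨ι, _, p, hp, e, ⟨E⟩⟩ := Module.equiv_directSum_of_isTorsion
    (AEval.isTorsion_of_aeval_eq_zero (R := F) (M := V) haφ ha0)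
  have hI : ∀ i, ∀ q ∈ Submodule.span F[X] {p i ^ e i},
      q.comp (-X) ∈ Submodule.span F[X] {p i ^ e i} := by
    intro i q hq
    change q ∈ Ideal.span {p i ^ e i} at hq
    change q.comp (-X) ∈ Ideal.span {p i ^ e i}
    rw [Ideal.mem_span_singleton] at hq ⊢
    rcases Nat.eq_zero_or_pos (e i) with h0 | h0
    · simp [h0]
    have hpa : p i ^ e i ∣ a := by
      have h1 : a • E.symm (DirectSum.of (fun i ↦ F[X] ⧸ Submodule.span F[X] {p i ^ e i}) i
          (Submodule.Quotient.mk 1)) = 0 := by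
        apply (AEval.of F V φ).symm.injective
        rw [AEval.of_symm_smul, haφ, zero_smul, map_zero]
      rw [← map_smul, LinearEquiv.map_eq_zero_iff] at h1
      have h2 := DFunLike.congr_fun h1 i
      rw [DirectSum.smul_apply, DirectSum.of_eq_same, ← Submodule.Quotient.mk_smul,
        DirectSum.zero_apply, Submodule.Quotient.mk_eq_zero, smul_eq_mul, mul_one] at h2
      exact Ideal.mem_span_singleton.1 h2
    refine (pow_dvd_pow_of_dvd (ha _ (hp i) ((dvd_pow_self _ h0.ne').trans hpa)) _).trans ?_
    rw [← pow_comp]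
    exact comp_neg_X_dvd_comp_neg_X hq
  choose s hs hsmul using fun i ↦ exists_involutive_quotient (hI i)
  let s' := DirectSum.map s
  have hs' : ∀ x, s' (s' x) = x := fun x ↦ by
    ext i
    simp [s', hs]
  have hsmul' : ∀ (r : F[X]) x, s' (r • x) = r.comp (-X) • s' x := fun r x ↦ by
    ext i
    simp [s', hsmul, DirectSum.smul_apply]
  let o := AEval.of F V φ
  let S : V →ₗ[F] V :=
    { toFun v := o.symm (E.symm (s' (E (o v))))
      map_add' v w := by simp
      map_smul' c v := by
        rw [map_smul, ← AEval.C_smul, map_smul, hsmul', C_comp, map_smul, AEval.C_smul, map_smul,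
          RingHom.id_apply] }
  have hSS : ∀ v, S (S v) = v := fun v ↦ by simp [S, hs']
  refine ⟨LinearEquiv.ofInvolutive S hSS, fun v ↦ ?_, hSS⟩
  change o.symm (E.symm (s' (E (o (φ • v))))) = -φ • o.symm (E.symm (s' (E (o v))))
  rw [← AEval.X_smul_of, map_smul, hsmul', X_comp, map_smul, AEval.of_symm_smul, map_neg, aeval_X,
    neg_smul]

/-- If `b * b(-X)` annihilates `φ`, with coprime factors, and some automorphism anticommutes
with `φ`, then some involution does. -/
theorem exists_involutive_anticommute_of_isCoprime {b : F[X]} (hb : IsCoprime b (b.comp (-X)))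
    (hφ : aeval φ (b * b.comp (-X)) = 0) (T : V ≃ₗ[F] V) (hT : ∀ v, T (φ v) = -φ (T v)) :
    ∃ S : V ≃ₗ[F] V, (∀ v, S (φ v) = -φ (S v)) ∧ ∀ v, S (S v) = v := by
  set W := LinearMap.ker (aeval φ b) with hWdef
  set W' := LinearMap.ker (aeval φ (b.comp (-X))) with hWdef'
  have hpoly := apply_aeval_of_anticommute (T := T.toLinearMap) hT
  have hmap : W.map T.toLinearMap = W' := by
    ext v
    obtain ⟨v, rfl⟩ := T.surjective v
    have h := hpoly b v
    simp only [LinearEquiv.coe_coe] at h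
    simp [hWdef, hWdef', ← h]
  let t := T.ofSubmodules W W' hmap
  set e := Submodule.prodEquivOfIsCompl W W' (isCompl_ker_aeval hb hφ) with he
  have hW := apply_mem_ker_aeval φ b
  have hW' := apply_mem_ker_aeval φ (b.comp (-X))
  have heφ : ∀ x : W × W', φ (e x) = e (φ.restrict hW x.1, φ.restrict hW' x.2) := by
    intro x
    simp [he]
  have ht : ∀ w, t (φ.restrict hW w) = -φ.restrict hW' (t w) := fun w ↦ by
    ext
    simp [t, hT]
  have ht' : ∀ w, t.symm (φ.restrict hW' w) = -φ.restrict hW (t.symm w) := fun w ↦ by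
    rw [LinearEquiv.symm_apply_eq, map_neg, ht]
    simp
  refine ⟨e.symm ≪≫ₗ LinearEquiv.prodComm F W W' ≪≫ₗ t.symm.prodCongr t ≪≫ₗ e, fun v ↦ ?_,
    fun v ↦ ?_⟩
  · obtain ⟨x, rfl⟩ := e.surjective v
    rw [heφ]
    simp only [LinearEquiv.trans_apply, LinearEquiv.symm_apply_apply]
    rw [heφ, ← map_neg]
    congr 1
    ext1
    · exact ht' _
    · exact ht _
  · obtain ⟨x, rfl⟩ := e.surjective v
    simp

/-- An endomorphism similar to its opposite is so through an involution. -/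
theorem exists_involutive_anticommute [FiniteDimensional F V] (T : V ≃ₗ[F] V)
    (hT : ∀ v, T (φ v) = -φ (T v)) :
    ∃ S : V ≃ₗ[F] V, (∀ v, S (φ v) = -φ (S v)) ∧ ∀ v, S (S v) = v := by
  obtain ⟨a, b, ha0, ⟨c, hc⟩, hb, ha⟩ :=
    exists_dvd_mul_mul_comp_neg_X (minpoly F φ) (minpoly.ne_zero_of_finite F φ)
  have h0 : aeval φ (a * (b * b.comp (-X))) = 0 := by simp [hc]
  have hab : IsCoprime a (b * b.comp (-X)) :=
    (isCoprime_of_forall_irreducible_dvd_comp_neg_X hb ha).mul_right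
      (isCoprime_of_forall_irreducible_dvd_comp_neg_X
        (by rw [comp_neg_X_comp_neg_X]; exact hb.symm) ha)
  have hW := apply_mem_ker_aeval φ a
  have hW' := apply_mem_ker_aeval φ (b * b.comp (-X))
  obtain ⟨S₁, h₁, h₁'⟩ := exists_involutive_anticommute_of_aeval_eq_zero ha0
    (aeval_restrict_ker_aeval a hW) ha
  have hmap : (LinearMap.ker (aeval φ (b * b.comp (-X)))).map T.toLinearMap =
      LinearMap.ker (aeval φ (b * b.comp (-X))) := by
    ext v
    obtain ⟨v, rfl⟩ := T.surjective v
    have h := apply_aeval_of_anticommute (T := T.toLinearMap) hT (b * b.comp (-X)) v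
    rw [mul_comp, comp_neg_X_comp_neg_X, mul_comm (b.comp (-X))] at h
    simp only [LinearEquiv.coe_coe] at h
    rw [LinearMap.mem_ker, ← h]
    simp
  obtain ⟨S₂, h₂, h₂'⟩ := exists_involutive_anticommute_of_isCoprime hb
    (aeval_restrict_ker_aeval _ hW') (T.ofSubmodules _ _ hmap) (fun v ↦ by ext; simp [hT])
  obtain ⟨S, hS, hS'⟩ := exists_anticommute_of_isCompl (isCompl_ker_aeval hab h0) hW hW' h₁ h₂
  exact ⟨S, hS, hS' h₁' h₂'⟩

/-- A sum of two square-zero endomorphisms is similar to its opposite. -/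
theorem exists_anticommute_of_sq_eq_zero [FiniteDimensional F V] {α β : Module.End F V}
    (hα : α ^ 2 = 0) (hβ : β ^ 2 = 0) :
    ∃ S : V ≃ₗ[F] V, ∀ v, S ((α + β) v) = -(α + β) (S v) := by
  set φ := α + β with hφ
  have hanti : ∀ v, (α - β) (φ v) = -φ ((α - β) v) := fun v ↦ by
    have h : (α - β) * φ = -(φ * (α - β)) := by
      rw [eq_neg_iff_add_eq_zero]
      calc (α - β) * (α + β) + (α + β) * (α - β) = 2 * α ^ 2 - 2 * β ^ 2 := by noncomm_ring
        _ = 0 := by simp [hα, hβ]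
    exact LinearMap.congr_fun h v
  have hsq : ∀ v, (α - β) ((α - β) v) = -φ (φ v) := fun v ↦ by
    have h : (α - β) * (α - β) = -(φ * φ) := by
      rw [eq_neg_iff_add_eq_zero]
      calc (α - β) * (α - β) + (α + β) * (α + β) = 2 * α ^ 2 + 2 * β ^ 2 := by noncomm_ring
        _ = 0 := by simp [hα, hβ]
    exact LinearMap.congr_fun h v
  obtain ⟨k, hk, hk2⟩ := (φ.eventually_isCompl_ker_pow_range_pow.and
    (Filter.eventually_ge_atTop 2)).exists
  have hker : aeval φ (X ^ k : F[X]) = φ ^ k := by simp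
  rw [← hker] at hk
  have hW := apply_mem_ker_aeval φ (X ^ k)
  have hW' : ∀ v ∈ LinearMap.range (aeval φ (X ^ k : F[X])),
      φ v ∈ LinearMap.range (aeval φ (X ^ k : F[X])) := by
    rintro _ ⟨v, rfl⟩
    exact ⟨φ v, by rw [hker, ← mul_apply, ← mul_apply, pow_mul_comm']⟩
  have hD : ∀ v ∈ LinearMap.range (aeval φ (X ^ k : F[X])),
      (α - β) v ∈ LinearMap.range (aeval φ (X ^ k : F[X])) := by
    rintro _ ⟨v, rfl⟩
    rw [apply_aeval_of_anticommute hanti, X_pow_comp, neg_pow, map_mul, mul_apply,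
      ← mul_apply, ← map_mul, mul_comm, map_mul, mul_apply]
    exact LinearMap.mem_range_self _ _
  obtain ⟨S, hS, -⟩ := exists_involutive_anticommute_of_aeval_eq_zero (a := X ^ k)
    (pow_ne_zero k X_ne_zero)
    (aeval_restrict_ker_aeval _ hW) (fun p hp hpk ↦ by
      have h := hp.associated_of_dvd irreducible_X (hp.prime.dvd_of_dvd_pow hpk)
      have h' := comp_neg_X_dvd_comp_neg_X h.symm.dvd
      rw [X_comp, neg_dvd] at h'
      exact h.dvd.trans h')
  have hinj : Function.Injective ((α - β).restrict hD) := by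
    rw [injective_iff_map_eq_zero]
    rintro ⟨v, hv⟩ h
    have hv0 : (α - β) v = 0 := congrArg Subtype.val h
    have hφ2 : (φ ^ 2) v = 0 := by
      rw [pow_two, mul_apply, ← neg_eq_zero, ← hsq, hv0, map_zero]
    have hvk : v ∈ LinearMap.ker (aeval φ (X ^ k : F[X])) := by
      rw [LinearMap.mem_ker, hker, ← Nat.sub_add_cancel hk2, pow_add, mul_apply, hφ2, map_zero]
    exact Subtype.ext (Submodule.disjoint_def.1 hk.disjoint v hvk hv)
  obtain ⟨T, hT, -⟩ := exists_anticommute_of_isCompl hk hW hW' hS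
    (T' := LinearEquiv.ofInjectiveEndo _ hinj) (fun v ↦ Subtype.ext (hanti v))
  exact ⟨T, hT⟩

end Module.End

/-- An element anticommuting with an involution is a sum of two square-zero elements when `2` is
invertible. -/
theorem exists_sq_eq_zero_add_of_anticommute {F R : Type*} [Field F] [Ring R] [Algebra F R]
    (h2 : (2 : F) ≠ 0) {s m : R} (hs : s * s = 1) (hm : s * m = -(m * s)) :
    ∃ a b : R, a ^ 2 = 0 ∧ b ^ 2 = 0 ∧ m = a + b := by
  have hmul : ∀ t : R, s * (m * t) = -(m * (s * t)) := fun t ↦ by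
    rw [← mul_assoc, hm, neg_mul, mul_assoc]
  refine ⟨(2⁻¹ : F) • (m * (1 + s)), (2⁻¹ : F) • (m * (1 - s)), ?_, ?_, ?_⟩
  · rw [smul_pow, pow_two (m * _)]
    simp [mul_add, add_mul, mul_assoc, hm, hmul, hs]
  · rw [smul_pow, pow_two (m * _)]
    simp [mul_sub, sub_mul, mul_assoc, hm, hmul, hs, add_comm]
  · rw [← smul_add, ← mul_add, add_add_sub_cancel, one_add_one_eq_two, mul_two, ← two_smul F,
      smul_smul, inv_mul_cancel₀ h2, one_smul]

/-- Over a field of characteristic not 2, a matrix is the sum of two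
square-zero matrices iff it is similar to its opposite. -/
theorem sum_two_square_zero_iff_similar_neg (F : Type*) [Field F]
    (hchar : ringChar F ≠ 2) (n : ℕ) (M : Matrix (Fin n) (Fin n) F) :
    (∃ A B : Matrix (Fin n) (Fin n) F, A ^ 2 = 0 ∧ B ^ 2 = 0 ∧ M = A + B) ↔
      (∃ P : (Matrix (Fin n) (Fin n) F)ˣ, -M = (P : Matrix (Fin n) (Fin n) F) * M * ((↑P⁻¹ : Matrix (Fin n) (Fin n) F))) := by
  have h2 : (2 : F) ≠ 0 := Ring.two_ne_zero hchar
  let Φ := Matrix.toLinAlgEquiv' (R := F) (n := Fin n)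
  constructor
  · rintro ⟨A, B, hA, hB, rfl⟩
    obtain ⟨S, hS⟩ := Module.End.exists_anticommute_of_sq_eq_zero (α := Φ A) (β := Φ B)
      (by rw [← map_pow, hA, map_zero]) (by rw [← map_pow, hB, map_zero])
    let P := Units.map Φ.symm.toMulEquiv.toMonoidHom (LinearMap.GeneralLinearGroup.ofLinearEquiv S)
    refine ⟨P, ?_⟩
    rw [Units.eq_mul_inv_iff_mul_eq]
    apply Φ.injective
    have hP : Φ (P : Matrix (Fin n) (Fin n) F) = S.toLinearMap := Φ.apply_symm_apply _
    rw [map_mul, map_mul, map_neg, hP, map_add]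
    exact LinearMap.ext fun v ↦ (hS v).symm
  · rintro ⟨P, hP⟩
    rw [Units.eq_mul_inv_iff_mul_eq] at hP
    let T := LinearMap.GeneralLinearGroup.toLinearEquiv (Units.map Φ.toMulEquiv.toMonoidHom P)
    obtain ⟨S, hS, hSS⟩ := Module.End.exists_involutive_anticommute (φ := Φ M) T (fun v ↦ by
      have h := LinearMap.congr_fun (congrArg Φ hP) v
      rw [map_mul, map_mul, map_neg] at h
      exact h.symm)
    refine exists_sq_eq_zero_add_of_anticommute h2 (s := Φ.symm S.toLinearMap) ?_ ?_
    · apply Φ.injective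
      rw [map_mul, Φ.apply_symm_apply, map_one]
      exact LinearMap.ext hSS
    · apply Φ.injective
      rw [map_mul, map_neg, map_mul, Φ.apply_symm_apply]
      exact LinearMap.ext hS
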